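/- arXiv:1608.00865 — 3 statements merged into one kernel-verified Lean document; each statement's English description precedes it below -/
import Mathlib

section
/- There is an absolute constant C > 0 with the following property: for every pair of positive integers t ≤ n there exists a set DC ⊆ {1,…,n} with |DC| ≤ C·n/√t such that for all i, j ∈ {1,…,n−t} there exists an integer h with 0 ≤ h < t, i + h ∈ DC, and j + h ∈ DC (i.e., DC is a t-difference-cover of {1,…,n}). -/
/-!
Put `s = ⌊√t⌋` and `m = s²`, so `m ≤ t`, and take for the cover all `x ∈ {1,…,n}` such that
`x mod m < s` or `s ∣ x`. Given `i` and `j`, some `h₀` has `m ∣ i + h₀`, and among the shifts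
`h₀ + k` with `k < s` one makes `j + h₀ + k` a multiple of `s`. Both conditions, `(i + h) mod m < s`
and `s ∣ j + h`, depend only on `h mod m`, so `h` can be reduced below `m ≤ t`.
Each of the two parts of the cover has at most `2n/s` elements, and `√t ≤ 2s`.
-/

theorem difference_cover_shift (s i j : ℕ) (hs : 0 < s) :
    ∃ h, h < s * s ∧ (i + h) % (s * s) < s ∧ s ∣ j + h := by
  have hm : 0 < s * s := Nat.mul_pos hs hs
  have hi := Nat.mod_lt i hm
  obtain ⟨a, ha⟩ : ∃ a, s * s ∣ i + a :=
    ⟨s * s - i % (s * s), by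
      have := Nat.div_add_mod i (s * s)
      exact ⟨i / (s * s) + 1, by rw [mul_add]; omega⟩⟩
  obtain ⟨k, hk, hd⟩ : ∃ k, k < s ∧ s ∣ j + a + k := by
    refine ⟨(s - (j + a) % s) % s, Nat.mod_lt _ hs, ?_⟩
    have := Nat.div_add_mod (j + a) s
    have h2 := Nat.mod_lt (j + a) hs
    rw [Nat.dvd_iff_mod_eq_zero, Nat.add_mod_mod, ← Nat.dvd_iff_mod_eq_zero]
    exact ⟨(j + a) / s + 1, by rw [mul_add]; omega⟩
  refine ⟨(a + k) % (s * s), Nat.mod_lt _ hm, ?_, ?_⟩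
  · rw [Nat.add_mod_mod, ← add_assoc, Nat.add_mod, Nat.mod_eq_zero_of_dvd ha, zero_add,
      Nat.mod_mod]
    exact (Nat.mod_le _ _).trans_lt hk
  · rw [Nat.dvd_iff_mod_eq_zero, Nat.add_mod, Nat.mod_mod_of_dvd _ (Dvd.intro _ rfl),
      ← Nat.add_mod, ← add_assoc]
    exact Nat.mod_eq_zero_of_dvd hd

/-- Writing `x = m * q + r`, the pair `(q, r)` takes at most `(n / m + 1) * s` values. -/
theorem card_filter_mod_lt_le (n m s : ℕ) :
    ((Finset.Icc 1 n).filter (fun x => x % m < s)).card ≤ (n / m + 1) * s := by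
  have := Finset.card_le_card_of_injOn
    (s := (Finset.Icc 1 n).filter (fun x => x % m < s))
    (t := Finset.range (n / m + 1) ×ˢ Finset.range s) (fun x => (x / m, x % m))
    (by
      intro x hx
      simp only [Finset.coe_filter, Finset.mem_Icc, Set.mem_ofPred_eq] at hx
      simp only [Finset.coe_product, Set.mem_prod, Finset.coe_range, Set.mem_Iio]
      exact ⟨Nat.lt_succ_of_le (Nat.div_le_div_right hx.1.2), hx.2⟩)
    (by
      intro x _ y _ hxy
      simp only [Prod.mk.injEq] at hxy
      rw [← Nat.div_add_mod x m, ← Nat.div_add_mod y m, hxy.1, hxy.2])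
  simpa using this

theorem card_filter_dvd_le (n s : ℕ) :
    ((Finset.Icc 1 n).filter (fun x => s ∣ x)).card ≤ n / s + 1 := by
  refine le_trans (Finset.card_le_card ?_) ((card_filter_mod_lt_le n s 1).trans (by simp))
  intro x hx
  simp only [Finset.mem_filter] at hx ⊢
  exact ⟨hx.1, by rw [Nat.mod_eq_zero_of_dvd hx.2]; exact one_pos⟩

/-- Lemma (difference covers): there is an absolute constant `C > 0` such that for
all positive integers `t ≤ n` there is a `t`-difference-cover `DC ⊆ {1,…,n}` of
size at most `C·n/√t`. -/
theorem difference_cover_exists : ∃ C : ℝ, 0 < C ∧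
    ∀ t n : ℕ, 0 < t → t ≤ n →
      ∃ DC : Finset ℕ, DC ⊆ Finset.Icc 1 n ∧
        (DC.card : ℝ) ≤ C * (n : ℝ) / Real.sqrt (t : ℝ) ∧
        ∀ i j : ℕ, 1 ≤ i → i ≤ n - t → 1 ≤ j → j ≤ n - t →
          ∃ h : ℕ, h < t ∧ i + h ∈ DC ∧ j + h ∈ DC := by
  refine ⟨8, by norm_num, fun t n ht htn => ?_⟩
  obtain ⟨s, hs⟩ : ∃ s, s = Nat.sqrt t := ⟨_, rfl⟩
  have hs0 : 0 < s := hs ▸ Nat.sqrt_pos.2 ht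
  have hst : s * s ≤ t := hs ▸ Nat.sqrt_le t
  have hts : t < (s + 1) * (s + 1) := hs ▸ Nat.lt_succ_sqrt t
  refine ⟨(Finset.Icc 1 n).filter (fun x => x % (s * s) < s) ∪
    (Finset.Icc 1 n).filter (fun x => s ∣ x),
    Finset.union_subset (Finset.filter_subset _ _) (Finset.filter_subset _ _), ?_, ?_⟩
  · have hU := Finset.card_union_le ((Finset.Icc 1 n).filter (fun x => x % (s * s) < s))
      ((Finset.Icc 1 n).filter (fun x => s ∣ x))
    have hA := card_filter_mod_lt_le n (s * s) s
    have hB := card_filter_dvd_le n s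
    generalize (_ ∪ _ : Finset ℕ).card = c at *
    have h1 : n / (s * s) * (s * s) ≤ n := Nat.div_mul_le_self _ _
    have h2 : n / s * s ≤ n := Nat.div_mul_le_self _ _
    have h3 : s ≤ s * s := Nat.le_mul_self s
    have hc : c * s ≤ 4 * n := by
      calc c * s ≤ ((n / (s * s) + 1) * s + (n / s + 1)) * s := by gcongr; omega
        _ = n / (s * s) * (s * s) + s * s + n / s * s + s := by ring
        _ ≤ 4 * n := by omega
    have hsq : Real.sqrt t ≤ 2 * s := by
      rw [Real.sqrt_le_left (by positivity)]
      have : t ≤ (2 * s) ^ 2 := by nlinarith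
      exact_mod_cast this
    rw [le_div_iff₀ (Real.sqrt_pos.2 (by exact_mod_cast ht))]
    have hcR : (c : ℝ) * s ≤ 4 * n := by exact_mod_cast hc
    calc (c : ℝ) * Real.sqrt t ≤ c * (2 * s) := by gcongr
      _ ≤ 8 * n := by linarith
  · intro i j hi hin hj hjn
    obtain ⟨h, h1, h2, h3⟩ := difference_cover_shift s i j hs0
    refine ⟨h, by omega, ?_, ?_⟩
    · simp only [Finset.mem_union, Finset.mem_filter, Finset.mem_Icc]
      exact Or.inl ⟨by omega, h2⟩
    · simp only [Finset.mem_union, Finset.mem_filter, Finset.mem_Icc]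
      exact Or.inr ⟨by omega, h3⟩
end

section
/- Fix integers p ≤ q and let r_1,…,r_m (m ≥ 1) be positive integers with 2·r_i ≤ q − p + 1 for every i, and let r = gcd(r_1,…,r_m). For each i let e_i be the period constraint enforcing period r_i on T[p..q] (the substring equation T[p..q−r_i] = T[p+r_i..q]), and let e be the period constraint enforcing period r on T[p..q]. Then: (a) T satisfies all of e_1,…,e_m if and only if T satisfies e; and (b) for every positive integer S, if T satisfies e with shortage S, then T satisfies each e_i with shortage S. -/
/-!
The forward direction of the equivalence is the weak Fine–Wilf periodicity lemma: if `a` and `b`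
are periods of a fragment of length at least `a + b`, then so is `gcd a b`. It follows from
Euclid's subtractive algorithm, since for `a ≤ b` the difference `b - a` is again a period
(`fragPeriod_sub`) and the length bound is preserved. As every `r i` is at most half the length,
so is each partial gcd, and the lemma can be applied to `r 0, …, r (m - 1)` one at a time.

The backward direction and the claim about shortage both say that a multiple of a period is a
period, on the fragments `T[p..q]` and `T[p+S..q-S]` respectively (`FragPeriod.of_dvd`).
-/

/-- `a` is a period of the fragment `T[p..q]`. The value `a = 0` is allowed, and is then
trivially a period. -/
def FragPeriod {α : Type*} (T : ℤ → α) (p q : ℤ) (a : ℕ) : Prop :=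
  ∀ k : ℤ, p ≤ k → k ≤ q - (a : ℤ) → T k = T (k + (a : ℤ))

theorem fragPeriod_sub {α : Type*} {T : ℤ → α} {p q : ℤ} {a b : ℕ} (hab : a ≤ b)
    (hlen : (a : ℤ) + b ≤ q - p + 1) (ha : FragPeriod T p q a) (hb : FragPeriod T p q b) :
    FragPeriod T p q (b - a) := by
  intro k hk hkq
  rw [Nat.cast_sub hab] at hkq ⊢
  -- Either a jump by `b` to the right stays inside the fragment, or a jump by `a` to the left does.
  by_cases h : k ≤ q - b
  · have h1 := hb k hk h
    have h2 := ha (k + (b - a)) (by omega) (by omega)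
    rw [h1, h2]
    congr 1
    ring
  · have h1 := ha (k - a) (by omega) (by omega)
    have h2 := hb (k - a) (by omega) (by omega)
    rw [sub_add_cancel] at h1
    rw [← h1, h2]
    congr 1
    ring

/-- Weak periodicity lemma of Fine and Wilf, by Euclid's subtractive algorithm. -/
theorem FragPeriod.gcd {α : Type*} {T : ℤ → α} {p q : ℤ} (a b : ℕ)
    (hlen : (a : ℤ) + b ≤ q - p + 1) (ha : FragPeriod T p q a) (hb : FragPeriod T p q b) :
    FragPeriod T p q (Nat.gcd a b) := by
  rcases Nat.eq_zero_or_pos a with rfl | ha0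
  · simpa using hb
  rcases Nat.eq_zero_or_pos b with rfl | hb0
  · simpa using ha
  rcases le_total a b with hab | hab
  · have h := FragPeriod.gcd a (b - a) (by omega) ha (fragPeriod_sub hab hlen ha hb)
    rwa [Nat.gcd_sub_self_right hab] at h
  · have h := FragPeriod.gcd (a - b) b (by omega)
      (fragPeriod_sub hab (by omega) hb ha) hb
    rwa [Nat.gcd_sub_self_left hab] at h
termination_by a + b

theorem FragPeriod.of_dvd {α : Type*} {T : ℤ → α} {p q : ℤ} {a b : ℕ} (hab : a ∣ b)
    (ha : FragPeriod T p q a) : FragPeriod T p q b := by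
  obtain ⟨c, rfl⟩ := hab
  induction c with
  | zero => intro k _ _; simp
  | succ c ih =>
    intro k hk hkq
    have hc : (0 : ℤ) ≤ (a : ℤ) * c := by positivity
    push_cast [mul_add] at hkq ih ⊢
    have h1 := ih k hk (by push_cast; omega)
    have h2 := ha (k + (a : ℤ) * c) (by omega) (by omega)
    push_cast at h1
    rw [h1, h2]
    congr 1
    ring

/-- The bound by half the length is carried along because it is what makes the next application
of the periodicity lemma possible. -/
theorem fragPeriod_gcd_range {α : Type*} {T : ℤ → α} {p q : ℤ} (hpq : p ≤ q) (r : ℕ → ℕ) (n : ℕ)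
    (hpos : ∀ i < n, 0 < r i) (hhalf : ∀ i < n, 2 * (r i : ℤ) ≤ q - p + 1)
    (hper : ∀ i < n, FragPeriod T p q (r i)) :
    2 * (((Finset.range n).gcd r : ℕ) : ℤ) ≤ q - p + 1 ∧
      FragPeriod T p q ((Finset.range n).gcd r) := by
  induction n with
  | zero =>
    -- The empty gcd is `0`, a trivial period.
    refine ⟨by simp; omega, fun k _ _ => by simp⟩
  | succ n ih =>
    obtain ⟨hl, hg⟩ := ih (fun i hi => hpos i (by omega)) (fun i hi => hhalf i (by omega))
      (fun i hi => hper i (by omega))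
    have hn := hhalf n (by omega)
    rw [Finset.range_add_one, Finset.gcd_insert]
    change 2 * ((Nat.gcd (r n) ((Finset.range n).gcd r) : ℕ) : ℤ) ≤ _ ∧
      FragPeriod T p q (Nat.gcd (r n) ((Finset.range n).gcd r))
    have hle := Nat.gcd_le_left ((Finset.range n).gcd r) (hpos n (by omega))
    exact ⟨by omega, FragPeriod.gcd _ _ (by omega) (hper n (by omega)) hg⟩

/-- Lemma 15 (period constraints and gcd): if `r_1,…,r_m` are periods each at most
half the length of `T[p..q]`, and `r = gcd(r_1,…,r_m)`, then
(a) `T` satisfies all the period constraints for the `r_i` iff it satisfies the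
period constraint for `r`; and (b) for any positive shortage `S`, satisfying the
`r`-constraint with shortage `S` implies satisfying each `r_i`-constraint with
shortage `S`. -/
theorem period_constraints_gcd {α : Type*} (T : ℤ → α) (p q : ℤ) (hpq : p ≤ q)
    (m : ℕ) (hm : 1 ≤ m) (r : ℕ → ℕ)
    (hpos : ∀ i < m, 0 < r i)
    (hhalf : ∀ i < m, 2 * (r i : ℤ) ≤ q - p + 1) :
    ((∀ i < m, ∀ k : ℤ, p ≤ k → k ≤ q - (r i : ℤ) → T k = T (k + (r i : ℤ))) ↔
      (∀ k : ℤ, p ≤ k → k ≤ q - ((Finset.gcd (Finset.range m) r : ℕ) : ℤ) →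
        T k = T (k + ((Finset.gcd (Finset.range m) r : ℕ) : ℤ)))) ∧
    (∀ S : ℤ, 0 < S →
      (∀ k : ℤ, p + S ≤ k → k ≤ q - ((Finset.gcd (Finset.range m) r : ℕ) : ℤ) - S →
        T k = T (k + ((Finset.gcd (Finset.range m) r : ℕ) : ℤ))) →
      ∀ i < m, ∀ k : ℤ, p + S ≤ k → k ≤ q - (r i : ℤ) - S →
        T k = T (k + (r i : ℤ))) := by
  have hdvd : ∀ i < m, (Finset.range m).gcd r ∣ r i := fun i hi =>
    Finset.gcd_dvd (Finset.mem_range.mpr hi)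
  refine ⟨⟨fun h => (fragPeriod_gcd_range hpq r m hpos hhalf h).2,
    fun h i hi => FragPeriod.of_dvd (hdvd i hi) h⟩, fun S _ h i hi k hk hkq => ?_⟩
  -- Shortage `S` on `T[p..q]` is shortage `0` on `T[p+S..q-S]`.
  have h' : FragPeriod T (p + S) (q - S) ((Finset.range m).gcd r) :=
    fun k hk hkq => h k hk (by omega)
  exact h'.of_dvd (hdvd i hi) k hk (by omega)
end

section
/- Let G = (V, E) be a finite undirected multigraph with |V| ≥ 2, and let w be an oriented weight function on the arcs of G (each edge yields two mutually inverse arcs, and w(a^R) = −w(a) for every arc a with inverse a^R). Then there exist a subset E' ⊆ E with |E'| ≤ 2|V| and an oriented weight function c on the arcs of G such that for every arc a of G there is a directed cycle C of length at most 2⌈log₂ |V|⌉ which contains a, all of whose other arcs arise from edges of E', and which satisfies c(a) = w(C). -/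
/-!
Only the antisymmetry of `w` matters: it suffices to find `E'` with `|E'| ≤ 2|V|` such that the
endpoints of every edge are joined by a walk of length at most `2k - 1` in `E'`, where
`k = ⌈log₂ |V|⌉`. Closing that walk with the edge gives the cycle of one of its arcs, and the
reversed cycle, of opposite weight, serves the inverse arc.

Such an `E'` is built by ball growing. In the graph induced on the set `S` of remaining vertices,
let `B i` be the ball of radius `i` around some `v ∈ S`. Since `|S| ≤ 2 ^ k`, some `i < k` has
`|B (i + 1)| ≤ 2 |B i|`. Add to `E'` a breadth-first tree of `B (i + 1)`, which costs at most
`2 |B i|` edges, and remove `B i` from `S`. An edge of the induced graph meeting `B i` lies inside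
`B (i + 1)`, so its endpoints are joined through `v` by a walk of length at most
`i + (i + 1) ≤ 2k - 1` in the tree. The removed balls are disjoint, whence the bound `2|V|`.
-/

/-- The tail of an arc of a multigraph: each edge `e` with endpoint pair
`ends e = (u, v)` yields the arc `(e, true)` from `u` to `v` and the inverse arc
`(e, false)` from `v` to `u`. -/
def arcTail {V E : Type} (ends : E → V × V) (a : E × Bool) : V :=
  if a.2 then (ends a.1).1 else (ends a.1).2

/-- The head of an arc of a multigraph. -/
def arcHead {V E : Type} (ends : E → V × V) (a : E × Bool) : V :=
  if a.2 then (ends a.1).2 else (ends a.1).1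

/-- `IsArcWalk ends u v l`: the list of arcs `l` is a directed walk from `u` to `v`. -/
def IsArcWalk {V E : Type} (ends : E → V × V) : V → V → List (E × Bool) → Prop
  | u, v, [] => u = v
  | u, v, a :: l => arcTail ends a = u ∧ IsArcWalk ends (arcHead ends a) v l

/-- The inverse arc. -/
def arcInv {E : Type} (a : E × Bool) : E × Bool := (a.1, !a.2)

lemma arcTail_arcInv {V E : Type} (ends : E → V × V) (a : E × Bool) :
    arcTail ends (arcInv a) = arcHead ends a := by
  rcases a with ⟨e, _ | _⟩ <;> simp [arcTail, arcHead, arcInv]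

lemma arcHead_arcInv {V E : Type} (ends : E → V × V) (a : E × Bool) :
    arcHead ends (arcInv a) = arcTail ends a := by
  rcases a with ⟨e, _ | _⟩ <;> simp [arcTail, arcHead, arcInv]

lemma IsArcWalk.append {V E : Type} {ends : E → V × V} {u v x : V} {l m : List (E × Bool)}
    (hl : IsArcWalk ends u v l) (hm : IsArcWalk ends v x m) : IsArcWalk ends u x (l ++ m) := by
  induction l generalizing u with
  | nil => cases hl; exact hm
  | cons a l ih => exact ⟨hl.1, ih hl.2⟩

/-- The inverse walk: the inverse arcs in the opposite order. -/
def walkInv {E : Type} (l : List (E × Bool)) : List (E × Bool) := (l.map arcInv).reverse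

lemma IsArcWalk.inv {V E : Type} {ends : E → V × V} {u v : V} {l : List (E × Bool)}
    (hl : IsArcWalk ends u v l) : IsArcWalk ends v u (walkInv l) := by
  induction l generalizing u with
  | nil => exact Eq.symm hl
  | cons a l ih =>
    have h := (ih hl.2).append (m := [arcInv a])
      ⟨arcTail_arcInv ends a, (arcHead_arcInv ends a).trans hl.1⟩
    simpa [walkInv] using h

lemma length_walkInv {E : Type} (l : List (E × Bool)) : (walkInv l).length = l.length := by
  simp [walkInv]

lemma fst_mem_of_walkInv {E : Type} {l : List (E × Bool)} {F : Finset E}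
    (h : ∀ a ∈ l, a.1 ∈ F) : ∀ a ∈ walkInv l, a.1 ∈ F := by
  intro a ha
  obtain ⟨b, hb, rfl⟩ := List.mem_map.1 (List.mem_reverse.1 ha)
  exact h b hb

lemma sum_walkInv {E : Type} (w : E → Bool → ℤ) (hw : ∀ e b, w e (!b) = - w e b)
    (l : List (E × Bool)) :
    ((walkInv l).map (fun a => w a.1 a.2)).sum = - (l.map (fun a => w a.1 a.2)).sum := by
  induction l with
  | nil => simp [walkInv]
  | cons a l ih =>
    simp only [walkInv, List.map_cons, List.reverse_cons, List.map_append, List.sum_append,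
      List.sum_cons, List.map_nil, List.sum_nil] at ih ⊢
    rw [ih]
    simp [arcInv, hw]

lemma IsArcWalk.tail_zero {V E : Type} {ends : E → V × V} {u v : V} {l : List (E × Bool)}
    (hl : IsArcWalk ends u v l) (h : 0 < l.length) : arcTail ends l[0] = u := by
  cases l with
  | nil => simp at h
  | cons a l => exact hl.1

/-- The head of each arc of a walk is the tail of the next one, or the end of the walk. -/
lemma IsArcWalk.head_getElem {V E : Type} {ends : E → V × V} {u v : V} {l : List (E × Bool)}
    (hl : IsArcWalk ends u v l) (i : ℕ) (h : i < l.length) :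
    arcHead ends l[i] = if h' : i + 1 < l.length then arcTail ends l[i + 1] else v := by
  induction l generalizing u i with
  | nil => simp at h
  | cons a l ih =>
    cases i with
    | zero =>
      cases l with
      | nil => simpa [IsArcWalk] using hl.2
      | cons b l => simpa using hl.2.1.symm
    | succ i => simpa using ih hl.2 i (by simpa using h)

/-- A closed walk is a directed cycle in the sense of cyclically indexed arcs. -/
lemma IsArcWalk.closed {V E : Type} {ends : E → V × V} {u : V} {l : List (E × Bool)}
    (hl : IsArcWalk ends u u l) (i : ℕ) (h : i < l.length) :
    arcHead ends (l[i]'h) =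
      arcTail ends (l[(i + 1) % l.length]'(Nat.mod_lt _ (Nat.zero_lt_of_lt h))) := by
  rw [hl.head_getElem i h]
  split_ifs with h'
  · simp only [Nat.mod_eq_of_lt h']
  · have h0 : (i + 1) % l.length = 0 := by
      rw [show i + 1 = l.length by omega, Nat.mod_self]
    simp only [h0]
    exact (hl.tail_zero (by omega)).symm

open Classical in
/-- The ball of radius `m` around `v` in the subgraph induced on `S`. -/
noncomputable def arcBall {V E : Type} (ends : E → V × V) (S : Finset V) (v : V) : ℕ → Finset V
  | 0 => {v}
  | m + 1 => arcBall ends S v m ∪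
      S.filter fun y => ∃ a : E × Bool, arcTail ends a = y ∧ arcHead ends a ∈ arcBall ends S v m

lemma arcBall_subset {V E : Type} (ends : E → V × V) {S : Finset V} {v : V} (hv : v ∈ S) (m : ℕ) :
    arcBall ends S v m ⊆ S := by
  classical
  induction m with
  | zero => simpa [arcBall] using hv
  | succ m ih => exact Finset.union_subset ih (Finset.filter_subset _ _)

lemma mem_arcBall {V E : Type} (ends : E → V × V) (S : Finset V) (v : V) (m : ℕ) :
    v ∈ arcBall ends S v m := by
  classical
  induction m with
  | zero => simp [arcBall]
  | succ m ih => exact Finset.mem_union_left _ ih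

/-- A breadth-first tree of the ball, encoded by its edge set. Its walks to the root `v` are no
longer than the radius of any smaller concentric ball containing their starting point. -/
lemma exists_tree {V E : Type} (ends : E → V × V) (S : Finset V) (v : V) (m : ℕ) :
    ∃ T : Finset E, T.card ≤ (arcBall ends S v m).card ∧
      ∀ j ≤ m, ∀ y ∈ arcBall ends S v j,
        ∃ l, IsArcWalk ends y v l ∧ l.length ≤ j ∧ ∀ a ∈ l, a.1 ∈ T := by
  classical
  induction m with
  | zero =>
    refine ⟨∅, by simp, fun j hj y hy => ⟨[], ?_, by simp, by simp⟩⟩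
    obtain rfl : j = 0 := by omega
    simpa [arcBall, IsArcWalk] using hy
  | succ m ih =>
    obtain ⟨T, hT, hw⟩ := ih
    set D := arcBall ends S v (m + 1) \ arcBall ends S v m with hD
    have hnew : ∀ y : D, ∃ a : E × Bool,
        arcTail ends a = y ∧ arcHead ends a ∈ arcBall ends S v m := by
      rintro ⟨y, hy⟩
      obtain ⟨h1, h2⟩ := Finset.mem_sdiff.1 hy
      rcases Finset.mem_union.1 h1 with h | h
      · exact absurd h h2
      · exact (Finset.mem_filter.1 h).2
    choose p hp using hnew
    have hsub : arcBall ends S v m ⊆ arcBall ends S v (m + 1) := Finset.subset_union_left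
    refine ⟨T ∪ D.attach.image (fun y => (p y).1), ?_, ?_⟩
    · have h1 := Finset.card_union_le T (D.attach.image (fun y => (p y).1))
      have h2 := Finset.card_image_le (s := D.attach) (f := fun y => (p y).1)
      have h3 := Finset.card_sdiff_add_card_eq_card hsub
      rw [Finset.card_attach] at h2
      rw [← hD] at h3
      omega
    · intro j hj y hy
      rcases Nat.lt_or_ge m j with hmj | hjm
      · obtain rfl : j = m + 1 := by omega
        by_cases hym : y ∈ arcBall ends S v m
        · obtain ⟨l, hl, hlen, hlT⟩ := hw m le_rfl y hym
          exact ⟨l, hl, by omega, fun a ha => Finset.mem_union_left _ (hlT a ha)⟩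
        · have hyd : y ∈ D := Finset.mem_sdiff.2 ⟨hy, hym⟩
          obtain ⟨h1, h2⟩ := hp ⟨y, hyd⟩
          obtain ⟨l, hl, hlen, hlT⟩ := hw m le_rfl _ h2
          refine ⟨p ⟨y, hyd⟩ :: l, ⟨h1, hl⟩, by simpa using hlen, ?_⟩
          intro a ha
          rcases List.mem_cons.1 ha with rfl | ha
          · exact Finset.mem_union_right _
              (Finset.mem_image_of_mem (fun y => (p y).1) (Finset.mem_attach D ⟨y, hyd⟩))
          · exact Finset.mem_union_left _ (hlT a ha)
      · obtain ⟨l, hl, hlen, hlT⟩ := hw j hjm y hy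
        exact ⟨l, hl, hlen, fun a ha => Finset.mem_union_left _ (hlT a ha)⟩

/-- Balls cannot more than double `k` times inside a set of at most `2 ^ k` vertices. -/
lemma exists_radius {V E : Type} (ends : E → V × V) {S : Finset V} {v : V} (hv : v ∈ S) {k : ℕ}
    (hk : 1 ≤ k) (hS : S.card ≤ 2 ^ k) :
    ∃ i < k, (arcBall ends S v (i + 1)).card ≤ 2 * (arcBall ends S v i).card := by
  by_contra! hcon
  have key : ∀ j ≤ k, 2 ^ (j + 1) ≤ (arcBall ends S v j).card + 1 := by
    intro j
    induction j with
    | zero => simp [arcBall]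
    | succ j ih =>
      intro hj
      have h1 := ih (by omega)
      have h2 := hcon j (by omega)
      rw [pow_succ]
      omega
  have h1 := key k le_rfl
  have h2 := Finset.card_le_card (arcBall_subset ends hv k)
  have h3 : 2 ^ 1 ≤ 2 ^ k := Nat.pow_le_pow_right (by norm_num) hk
  rw [pow_succ] at h1
  omega

/-- The spanner of the subgraph induced on `S`, by removing balls one at a time. -/
lemma exists_spanner {V E : Type} (ends : E → V × V) {k : ℕ} (hk : 1 ≤ k) (S : Finset V)
    (hS : S.card ≤ 2 ^ k) :
    ∃ F : Finset E, F.card ≤ 2 * S.card ∧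
      ∀ a : E × Bool, arcTail ends a ∈ S → arcHead ends a ∈ S →
        ∃ l, IsArcWalk ends (arcHead ends a) (arcTail ends a) l ∧ l.length + 1 ≤ 2 * k ∧
          ∀ x ∈ l, x.1 ∈ F := by
  classical
  induction S using Finset.strongInduction with
  | H S ih =>
    rcases S.eq_empty_or_nonempty with rfl | ⟨v, hv⟩
    · exact ⟨∅, by simp, by simp⟩
    obtain ⟨i, hik, hi⟩ := exists_radius ends hv hk hS
    obtain ⟨T, hT, hwalk⟩ := exists_tree ends S v (i + 1)
    set B := arcBall ends S v i with hB
    have hBS : B ⊆ S := arcBall_subset ends hv i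
    have hss : S \ B ⊂ S :=
      Finset.sdiff_ssubset hBS ⟨v, mem_arcBall ends S v i⟩
    obtain ⟨F, hF, hFw⟩ := ih (S \ B) hss ((Finset.card_le_card hss.1).trans hS)
    refine ⟨T ∪ F, ?_, ?_⟩
    · have h1 := Finset.card_union_le T F
      have h2 := Finset.card_sdiff_add_card_eq_card hBS
      omega
    -- An arc whose head lies in `B`: both ends are joined to `v` in the tree.
    have main : ∀ a : E × Bool, arcTail ends a ∈ S → arcHead ends a ∈ B →
        ∃ l, IsArcWalk ends (arcHead ends a) (arcTail ends a) l ∧ l.length + 1 ≤ 2 * k ∧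
          ∀ x ∈ l, x.1 ∈ T ∪ F := by
      intro a ht hh
      have ht' : arcTail ends a ∈ arcBall ends S v (i + 1) :=
        Finset.mem_union_right _ (Finset.mem_filter.2 ⟨ht, a, rfl, hh⟩)
      obtain ⟨l, hl, hlen, hlT⟩ := hwalk i (by omega) _ hh
      obtain ⟨m, hm, hmlen, hmT⟩ := hwalk (i + 1) le_rfl _ ht'
      refine ⟨l ++ walkInv m, hl.append hm.inv, ?_, ?_⟩
      · rw [List.length_append, length_walkInv]
        omega
      · intro x hx
        rcases List.mem_append.1 hx with hx | hx
        · exact Finset.mem_union_left _ (hlT x hx)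
        · exact Finset.mem_union_left _ (fst_mem_of_walkInv hmT x hx)
    intro a ht hh
    by_cases hhB : arcHead ends a ∈ B
    · exact main a ht hhB
    by_cases htB : arcTail ends a ∈ B
    · obtain ⟨l, hl, hlen, hlT⟩ := main (arcInv a) (by rwa [arcTail_arcInv])
        (by rwa [arcHead_arcInv])
      rw [arcTail_arcInv, arcHead_arcInv] at hl
      exact ⟨walkInv l, hl.inv, by rwa [length_walkInv], fst_mem_of_walkInv hlT⟩
    · obtain ⟨l, hl, hlen, hlF⟩ := hFw a (Finset.mem_sdiff.2 ⟨ht, htB⟩)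
        (Finset.mem_sdiff.2 ⟨hh, hhB⟩)
      exact ⟨l, hl, hlen, fun x hx => Finset.mem_union_right _ (hlF x hx)⟩


/-- Lemma 16 (spanners with witness cycles): for any finite undirected multigraph
`(V, E)` with `|V| ≥ 2` and any oriented weight function `w`, there are a subset
`E' ⊆ E` with `|E'| ≤ 2|V|` and an oriented weight function `c` such that every
arc lies on a directed cycle of length at most `2⌈log₂ |V|⌉`, all of whose other
arcs come from `E'`, whose weight equals `c` of the arc. -/
theorem multigraph_spanner (V E : Type) [Fintype V] [Fintype E] [DecidableEq E]
    (ends : E → V × V) (hV : 2 ≤ Fintype.card V)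
    (w : E → Bool → ℤ) (hw : ∀ e b, w e (!b) = - w e b) :
    ∃ E' : Finset E, E'.card ≤ 2 * Fintype.card V ∧
      ∃ c : E → Bool → ℤ, (∀ e b, c e (!b) = - c e b) ∧
        ∀ e b, ∃ C : List (E × Bool),
          C ≠ [] ∧
          (e, b) ∈ C ∧
          C.length ≤ 2 * Nat.clog 2 (Fintype.card V) ∧
          (∀ a ∈ C, a ≠ (e, b) → a.1 ∈ E') ∧
          (∀ i : ℕ, (h : i < C.length) →
            arcHead ends (C[i]'h) =
              arcTail ends (C[(i + 1) % C.length]'(Nat.mod_lt _ (Nat.zero_lt_of_lt h)))) ∧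
          c e b = (C.map (fun a => w a.1 a.2)).sum := by
  have hk : 1 ≤ Nat.clog 2 (Fintype.card V) := Nat.clog_pos (by norm_num) hV
  obtain ⟨F, hF, hFw⟩ := exists_spanner ends hk Finset.univ
    (by simpa using Nat.le_pow_clog (by norm_num) (Fintype.card V))
  refine ⟨F, by simpa using hF, ?_⟩
  have hwalk : ∀ e : E, ∃ l,
      IsArcWalk ends (arcHead ends (e, true)) (arcTail ends (e, true)) l ∧
        l.length + 1 ≤ 2 * Nat.clog 2 (Fintype.card V) ∧ ∀ x ∈ l, x.1 ∈ F :=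
    fun e => hFw (e, true) (Finset.mem_univ _) (Finset.mem_univ _)
  choose p hp hlen hpF using hwalk
  refine ⟨fun e b => (if b then 1 else -1) *
    (w e true + ((p e).map (fun a => w a.1 a.2)).sum), ?_, ?_⟩
  · rintro e (_ | _) <;> simp
  rintro e (_ | _)
  · refine ⟨(e, false) :: walkInv (p e), by simp, by simp, ?_, ?_, ?_, ?_⟩
    · simpa [length_walkInv] using hlen e
    · intro a ha hne
      exact fst_mem_of_walkInv (hpF e) a ((List.mem_cons.1 ha).resolve_left hne)
    · exact IsArcWalk.closed (u := arcTail ends (e, false)) ⟨rfl, (hp e).inv⟩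
    · have hf : w e false = - w e true := hw e true
      rw [List.map_cons, List.sum_cons, sum_walkInv w hw]
      simp [hf]
      ring
  · refine ⟨(e, true) :: p e, by simp, by simp, ?_, ?_, ?_, ?_⟩
    · simpa using hlen e
    · intro a ha hne
      exact hpF e a ((List.mem_cons.1 ha).resolve_left hne)
    · exact IsArcWalk.closed (u := arcTail ends (e, true)) ⟨rfl, hp e⟩
    · simp
end
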